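/- For p = (p₁,p₂) ∈ ℝ² with p ≠ 0, define the 3×3 real matrix R(p) = (1/|p|)·[[|p|, 0, 0],[0, −p₁, −p₂],[0, p₂, −p₁]]. Then R(p) is an orthogonal matrix (in particular invertible), and for every q = (q₁,q₂) ∈ ℝ² one has R(p) · W(q) · R(p)ᵀ = −W((p·q)/|p|, (p∧q)/|p|), where p·q = p₁q₁ + p₂q₂ and p∧q = p₁q₂ − p₂q₁. -/

import Mathlib

/-!
`R(p)` is a rotation about the axis of the first basis vector `e`, and `W(q)` is the symmetrised
outer product of `e` with `(0, q)`. Since `A (x yᵀ) Aᵀ = (A x) (A y)ᵀ`, conjugating `W(q)` by a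
rotation that fixes `e` merely rotates `q`. In complex notation `R(p)` takes `q` to
`-conj(p) q / |p|`, and `conj(p) q` has real part `p · q` and imaginary part `p ∧ q`.
-/

open Matrix

/-- `W(a,b)`: the 3×3 real matrix with rows `(0, a, b)`, `(a, 0, 0)`, `(b, 0, 0)`. -/
def Wmat (a b : ℝ) : Matrix (Fin 3) (Fin 3) ℝ :=
  !![0, a, b; a, 0, 0; b, 0, 0]

/-- `R(p) = (1/|p|)·[[|p|, 0, 0],[0, −p₁, −p₂],[0, p₂, −p₁]]` for `p = (p₁,p₂) ≠ 0`. -/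
noncomputable def Rmat (p₁ p₂ : ℝ) : Matrix (Fin 3) (Fin 3) ℝ :=
  (1 / Real.sqrt (p₁ ^ 2 + p₂ ^ 2)) •
    !![Real.sqrt (p₁ ^ 2 + p₂ ^ 2), 0, 0; 0, -p₁, -p₂; 0, p₂, -p₁]

section CommSemiring

variable {R : Type*} [CommSemiring R]

/-- The symmetrised outer product `x yᵀ + y xᵀ`, without a factor `1 / 2`. It transforms simply
under `M ↦ A * M * Aᵀ`, and every `Wmat a b` is of this form. -/
def symmVecMulVec {m : Type*} (x y : m → R) : Matrix m m R :=
  vecMulVec x y + vecMulVec y x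

theorem mul_symmVecMulVec_mul_transpose {m n : Type*} [Fintype n] (A : Matrix m n R)
    (x y : n → R) :
    A * symmVecMulVec x y * Aᵀ = symmVecMulVec (A *ᵥ x) (A *ᵥ y) := by
  simp only [symmVecMulVec, Matrix.mul_add, Matrix.add_mul, mul_vecMulVec, vecMulVec_mul,
    vecMul_transpose]

end CommSemiring

section CommRing

variable {R : Type*} [CommRing R]

/-- The rotation about the first coordinate axis through the angle with cosine `c` and sine `s`.
The two are arbitrary scalars here; the matrix is orthogonal when `c ^ 2 + s ^ 2 = 1`. -/
def axisRotation (c s : R) : Matrix (Fin 3) (Fin 3) R :=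
  !![1, 0, 0; 0, c, -s; 0, s, c]

theorem axisRotation_one_zero : axisRotation (1 : R) 0 = 1 := by
  rw [axisRotation, neg_zero, one_fin_three]

theorem transpose_axisRotation (c s : R) : (axisRotation c s)ᵀ = axisRotation c (-s) := by
  ext i j
  fin_cases i <;> fin_cases j <;> simp [axisRotation]

theorem axisRotation_mul_axisRotation (c s c' s' : R) :
    axisRotation c s * axisRotation c' s' =
      axisRotation (c * c' - s * s') (s * c' + c * s') := by
  ext i j
  fin_cases i <;> fin_cases j <;>
    simp [axisRotation, mul_apply, Fin.sum_univ_three] <;> ring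

theorem axisRotation_mul_transpose {c s : R} (h : c ^ 2 + s ^ 2 = 1) :
    axisRotation c s * (axisRotation c s)ᵀ = 1 := by
  have hc : c * c - s * -s = 1 := by linear_combination h
  have hs : s * c + c * -s = 0 := by ring
  rw [transpose_axisRotation, axisRotation_mul_axisRotation, hc, hs, axisRotation_one_zero]

theorem axisRotation_mulVec (c s x y z : R) :
    axisRotation c s *ᵥ ![x, y, z] = ![x, c * y - s * z, s * y + c * z] := by
  ext i
  fin_cases i <;> simp [axisRotation, mulVec, dotProduct, Fin.sum_univ_three, sub_eq_add_neg]

end CommRing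

theorem Wmat_eq_symmVecMulVec (a b : ℝ) : Wmat a b = symmVecMulVec ![1, 0, 0] ![0, a, b] := by
  ext i j
  fin_cases i <;> fin_cases j <;> simp [Wmat, symmVecMulVec]

theorem neg_Wmat (a b : ℝ) : -Wmat a b = Wmat (-a) (-b) := by
  simp [Wmat]

theorem axisRotation_mul_Wmat_mul_transpose (c s a b : ℝ) :
    axisRotation c s * Wmat a b * (axisRotation c s)ᵀ = Wmat (c * a - s * b) (s * a + c * b) := by
  simp only [Wmat_eq_symmVecMulVec, mul_symmVecMulVec_mul_transpose, axisRotation_mulVec,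
    mul_zero, sub_zero, add_zero]

theorem sqrt_sq_add_sq_ne_zero {x y : ℝ} (h : (x, y) ≠ (0, 0)) : √(x ^ 2 + y ^ 2) ≠ 0 := by
  contrapose! h
  have hsum : x ^ 2 + y ^ 2 = 0 := (Real.sqrt_eq_zero (by positivity)).mp h
  obtain ⟨hx, hy⟩ := (add_eq_zero_iff_of_nonneg (sq_nonneg x) (sq_nonneg y)).mp hsum
  rw [sq_eq_zero_iff.mp hx, sq_eq_zero_iff.mp hy]

theorem sq_div_sqrt_add_sq_div_sqrt {x y : ℝ} (h : (x, y) ≠ (0, 0)) :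
    (x / √(x ^ 2 + y ^ 2)) ^ 2 + (y / √(x ^ 2 + y ^ 2)) ^ 2 = 1 := by
  have hsq : √(x ^ 2 + y ^ 2) ^ 2 = x ^ 2 + y ^ 2 := Real.sq_sqrt (by positivity)
  rw [div_pow, div_pow, ← add_div, hsq, div_self (hsq ▸ pow_ne_zero 2 (sqrt_sq_add_sq_ne_zero h))]

theorem Rmat_eq_axisRotation {p₁ p₂ : ℝ} (hp : (p₁, p₂) ≠ (0, 0)) :
    Rmat p₁ p₂ =
      axisRotation (-(p₁ / √(p₁ ^ 2 + p₂ ^ 2))) (p₂ / √(p₁ ^ 2 + p₂ ^ 2)) := by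
  have hr := sqrt_sq_add_sq_ne_zero hp
  ext i j
  fin_cases i <;> fin_cases j <;> simp [Rmat, axisRotation, hr] <;> ring

theorem Rmat_mul_transpose {p₁ p₂ : ℝ} (hp : (p₁, p₂) ≠ (0, 0)) :
    Rmat p₁ p₂ * (Rmat p₁ p₂)ᵀ = 1 := by
  rw [Rmat_eq_axisRotation hp]
  exact axisRotation_mul_transpose (by rw [neg_sq, sq_div_sqrt_add_sq_div_sqrt hp])

/-- For `p ≠ 0`, `R(p)` is orthogonal (in particular invertible) and
`R(p) · W(q) · R(p)ᵀ = −W((p·q)/|p|, (p∧q)/|p|)`. -/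
theorem Rmat_orthogonal_conj_Wmat (p₁ p₂ : ℝ) (hp : (p₁, p₂) ≠ (0, 0)) :
    (Rmat p₁ p₂ * (Rmat p₁ p₂)ᵀ = 1 ∧ (Rmat p₁ p₂)ᵀ * Rmat p₁ p₂ = 1) ∧
      IsUnit (Rmat p₁ p₂) ∧
      ∀ q₁ q₂ : ℝ,
        Rmat p₁ p₂ * Wmat q₁ q₂ * (Rmat p₁ p₂)ᵀ =
          -Wmat ((p₁ * q₁ + p₂ * q₂) / Real.sqrt (p₁ ^ 2 + p₂ ^ 2))
            ((p₁ * q₂ - p₂ * q₁) / Real.sqrt (p₁ ^ 2 + p₂ ^ 2)) := by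
  have hR : Rmat p₁ p₂ * (Rmat p₁ p₂)ᵀ = 1 := Rmat_mul_transpose hp
  refine ⟨⟨hR, mul_eq_one_comm.mp hR⟩, .of_mul_eq_one _ hR, fun q₁ q₂ => ?_⟩
  rw [Rmat_eq_axisRotation hp, axisRotation_mul_Wmat_mul_transpose, neg_Wmat]
  congr 1 <;> ring
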